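/- Suppose |α| = |β| = |γ| = 1 and γ = -αβ. Then in H_{α,β,γ} the element z = -γ(α - e₁e₂) + (β - e₂e₃) - α(γ - e₃e₁) is central, and the center of H_{α,β,γ} is 3-dimensional, spanned by 1, c = βe₁ - γe₂ + αe₃ - e₁e₂e₃, and z. -/

import Mathlib

/-- The defining relations of the algebra `H_{α,β,γ}`. -/
inductive HRel (α β γ : ℝ) : FreeAlgebra ℝ (Fin 3) → FreeAlgebra ℝ (Fin 3) → Prop
  | sq1 : HRel α β γ (FreeAlgebra.ι ℝ 0 * FreeAlgebra.ι ℝ 0) (-1)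
  | sq2 : HRel α β γ (FreeAlgebra.ι ℝ 1 * FreeAlgebra.ι ℝ 1) (-1)
  | sq3 : HRel α β γ (FreeAlgebra.ι ℝ 2 * FreeAlgebra.ι ℝ 2) (-1)
  | ac12 : HRel α β γ (FreeAlgebra.ι ℝ 0 * FreeAlgebra.ι ℝ 1 + FreeAlgebra.ι ℝ 1 * FreeAlgebra.ι ℝ 0)
      (algebraMap ℝ (FreeAlgebra ℝ (Fin 3)) (2 * α))
  | ac23 : HRel α β γ (FreeAlgebra.ι ℝ 1 * FreeAlgebra.ι ℝ 2 + FreeAlgebra.ι ℝ 2 * FreeAlgebra.ι ℝ 1)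
      (algebraMap ℝ (FreeAlgebra ℝ (Fin 3)) (2 * β))
  | ac31 : HRel α β γ (FreeAlgebra.ι ℝ 2 * FreeAlgebra.ι ℝ 0 + FreeAlgebra.ι ℝ 0 * FreeAlgebra.ι ℝ 2)
      (algebraMap ℝ (FreeAlgebra ℝ (Fin 3)) (2 * γ))

/-- The algebra `H_{α,β,γ}`. -/
abbrev HAlg (α β γ : ℝ) : Type := RingQuot (HRel α β γ)

/-- The generators `e₁, e₂, e₃` of `H_{α,β,γ}` (indexed `0, 1, 2`). -/
noncomputable def eH (α β γ : ℝ) (i : Fin 3) : HAlg α β γ :=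
  RingQuot.mkAlgHom ℝ (HRel α β γ) (FreeAlgebra.ι ℝ i)

/-- The central element `c = βe₁ - γe₂ + αe₃ - e₁e₂e₃` of `H_{α,β,γ}`. -/
noncomputable def cH (α β γ : ℝ) : HAlg α β γ :=
  β • eH α β γ 0 - γ • eH α β γ 1 + α • eH α β γ 2 - eH α β γ 0 * eH α β γ 1 * eH α β γ 2

/-- The element `z = -γ(α - e₁e₂) + (β - e₂e₃) - α(γ - e₃e₁)` of `H_{α,β,γ}`. -/
noncomputable def zH (α β γ : ℝ) : HAlg α β γ :=
  (-γ) • (algebraMap ℝ (HAlg α β γ) α - eH α β γ 0 * eH α β γ 1) +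
    (algebraMap ℝ (HAlg α β γ) β - eH α β γ 1 * eH α β γ 2) -
    α • (algebraMap ℝ (HAlg α β γ) γ - eH α β γ 2 * eH α β γ 0)

/-- The linear combination, with coefficients `a`, of the ordered square-free monomials in
`f₁, f₂, f₃`. -/
def monomialSum {A : Type*} [Ring A] [Algebra ℝ A] (f₁ f₂ f₃ : A) (a : Fin 8 → ℝ) : A :=
  a 0 • (1 : A) + a 1 • f₁ + a 2 • f₂ + a 3 • f₃ + a 4 • (f₁ * f₂) + a 5 • (f₁ * f₃) +
    a 6 • (f₂ * f₃) + a 7 • (f₁ * (f₂ * f₃))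

/-- The relations of the Clifford algebra of the diagonal form `⟨-1, 0, 0⟩`. -/
structure IsDegenerateTriple {A : Type*} [Ring A] (f₁ f₂ f₃ : A) : Prop where
  sq₁ : f₁ * f₁ = -1
  sq₂ : f₂ * f₂ = 0
  sq₃ : f₃ * f₃ = 0
  anti₂₁ : f₂ * f₁ = -(f₁ * f₂)
  anti₃₁ : f₃ * f₁ = -(f₁ * f₃)
  anti₃₂ : f₃ * f₂ = -(f₂ * f₃)

namespace IsDegenerateTriple

section Ring

variable {A : Type*} [Ring A] {f₁ f₂ f₃ : A}

theorem sq₁_mul (h : IsDegenerateTriple f₁ f₂ f₃) (x : A) : f₁ * (f₁ * x) = -x := by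
  rw [← mul_assoc, h.sq₁, neg_one_mul]

theorem sq₂_mul (h : IsDegenerateTriple f₁ f₂ f₃) (x : A) : f₂ * (f₂ * x) = 0 := by
  rw [← mul_assoc, h.sq₂, zero_mul]

theorem anti₂₁_mul (h : IsDegenerateTriple f₁ f₂ f₃) (x : A) :
    f₂ * (f₁ * x) = -(f₁ * (f₂ * x)) := by
  rw [← mul_assoc, h.anti₂₁, neg_mul, mul_assoc]

theorem anti₃₁_mul (h : IsDegenerateTriple f₁ f₂ f₃) (x : A) :
    f₃ * (f₁ * x) = -(f₁ * (f₃ * x)) := by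
  rw [← mul_assoc, h.anti₃₁, neg_mul, mul_assoc]

theorem anti₃₂_mul (h : IsDegenerateTriple f₁ f₂ f₃) (x : A) :
    f₃ * (f₂ * x) = -(f₂ * (f₃ * x)) := by
  rw [← mul_assoc, h.anti₃₂, neg_mul, mul_assoc]

theorem commute_mul (h : IsDegenerateTriple f₁ f₂ f₃) :
    Commute f₁ (f₂ * f₃) ∧ Commute f₂ (f₂ * f₃) ∧ Commute f₃ (f₂ * f₃) := by
  refine ⟨?_, ?_, ?_⟩ <;>
    simp [Commute, SemiconjBy, mul_assoc, h.sq₃, h.anti₃₁, h.anti₃₂,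
      h.sq₂_mul, h.anti₂₁_mul, h.anti₃₂_mul]

theorem commute_mul_mul (h : IsDegenerateTriple f₁ f₂ f₃) :
    Commute f₁ (f₁ * (f₂ * f₃)) ∧ Commute f₂ (f₁ * (f₂ * f₃)) ∧
      Commute f₃ (f₁ * (f₂ * f₃)) := by
  refine ⟨?_, ?_, ?_⟩ <;>
    simp [Commute, SemiconjBy, mul_assoc, h.sq₃, h.anti₃₁, h.anti₃₂,
      h.sq₂_mul, h.anti₂₁_mul, h.anti₃₁_mul, h.anti₃₂_mul]

end Ring

variable {A : Type*} [Ring A] [Algebra ℝ A] {f₁ f₂ f₃ : A}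

theorem mul_monomialSum₁ (h : IsDegenerateTriple f₁ f₂ f₃) (a : Fin 8 → ℝ) :
    f₁ * monomialSum f₁ f₂ f₃ a =
      monomialSum f₁ f₂ f₃ ![-a 1, a 0, -a 4, -a 5, a 2, a 3, -a 7, a 6] := by
  simp [monomialSum, mul_add, h.sq₁, h.sq₁_mul]
  module

theorem mul_monomialSum₂ (h : IsDegenerateTriple f₁ f₂ f₃) (a : Fin 8 → ℝ) :
    f₂ * monomialSum f₁ f₂ f₃ a =
      monomialSum f₁ f₂ f₃ ![0, 0, a 0, 0, -a 1, 0, a 3, -a 5] := by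
  simp [monomialSum, mul_add, h.sq₂, h.sq₂_mul, h.anti₂₁, h.anti₂₁_mul]

theorem mul_monomialSum₃ (h : IsDegenerateTriple f₁ f₂ f₃) (a : Fin 8 → ℝ) :
    f₃ * monomialSum f₁ f₂ f₃ a =
      monomialSum f₁ f₂ f₃ ![0, 0, 0, a 0, 0, -a 1, -a 2, a 4] := by
  simp [monomialSum, mul_add, h.sq₃, h.anti₃₁, h.anti₃₁_mul, h.anti₃₂, h.anti₃₂_mul]

theorem monomialSum_mul₁ (h : IsDegenerateTriple f₁ f₂ f₃) (a : Fin 8 → ℝ) :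
    monomialSum f₁ f₂ f₃ a * f₁ =
      monomialSum f₁ f₂ f₃ ![-a 1, a 0, a 4, a 5, -a 2, -a 3, -a 7, a 6] := by
  simp [monomialSum, add_mul, mul_assoc, h.sq₁, h.sq₁_mul, h.anti₂₁, h.anti₃₁, h.anti₂₁_mul]
  module

theorem monomialSum_mul₂ (h : IsDegenerateTriple f₁ f₂ f₃) (a : Fin 8 → ℝ) :
    monomialSum f₁ f₂ f₃ a * f₂ =
      monomialSum f₁ f₂ f₃ ![0, 0, a 0, 0, a 1, 0, -a 3, -a 5] := by
  simp [monomialSum, add_mul, mul_assoc, h.sq₂, h.sq₂_mul, h.anti₃₂]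

end IsDegenerateTriple

section

variable {A : Type*} [Ring A] [Algebra ℝ A]

theorem monomialSum_add (f₁ f₂ f₃ : A) (a b : Fin 8 → ℝ) :
    monomialSum f₁ f₂ f₃ (a + b) = monomialSum f₁ f₂ f₃ a + monomialSum f₁ f₂ f₃ b := by
  simp only [monomialSum, Pi.add_apply]
  module

theorem monomialSum_smul (f₁ f₂ f₃ : A) (r : ℝ) (a : Fin 8 → ℝ) :
    monomialSum f₁ f₂ f₃ (r • a) = r • monomialSum f₁ f₂ f₃ a := by
  simp only [monomialSum, Pi.smul_apply, smul_eq_mul]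
  module

theorem map_monomialSum {B : Type*} [Ring B] [Algebra ℝ B] (φ : A →ₐ[ℝ] B) (f₁ f₂ f₃ : A)
    (a : Fin 8 → ℝ) :
    φ (monomialSum f₁ f₂ f₃ a) = monomialSum (φ f₁) (φ f₂) (φ f₃) a := by
  simp [monomialSum]

end

open Complex in
/-- The first generator of the matrix model: `i` times the parity operator on the complex
exterior algebra of a plane. -/
noncomputable def gradingMatrix : Matrix (Fin 4) (Fin 4) ℂ :=
  !![I, 0, 0, 0; 0, -I, 0, 0; 0, 0, -I, 0; 0, 0, 0, I]

/-- Left exterior multiplication by the first basis vector of a plane. -/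
def wedgeMatrix₁ : Matrix (Fin 4) (Fin 4) ℂ :=
  !![0, 0, 0, 0; 1, 0, 0, 0; 0, 0, 0, 0; 0, 0, 1, 0]

/-- Left exterior multiplication by the second basis vector of a plane. -/
def wedgeMatrix₂ : Matrix (Fin 4) (Fin 4) ℂ :=
  !![0, 0, 0, 0; 0, 0, 0, 0; 1, 0, 0, 0; 0, -1, 0, 0]

theorem isDegenerateTriple_matrix :
    IsDegenerateTriple gradingMatrix wedgeMatrix₁ wedgeMatrix₂ := by
  constructor <;> ext i j <;> fin_cases i <;> fin_cases j <;>
    simp [gradingMatrix, wedgeMatrix₁, wedgeMatrix₂, Matrix.mul_apply, Fin.sum_univ_four]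

theorem monomialSum_matrix_injective :
    Function.Injective (monomialSum gradingMatrix wedgeMatrix₁ wedgeMatrix₂) := by
  intro a b h
  have key (i : Fin 4) := congrFun (congrFun h i) 0
  have h0 := key 0
  have h1 := key 1
  have h2 := key 2
  have h3 := key 3
  simp [monomialSum, gradingMatrix, wedgeMatrix₁, wedgeMatrix₂, Complex.ext_iff] at h0 h1 h2 h3
  ext i
  fin_cases i <;> simp <;> linarith

section HAlg

variable {α β γ : ℝ}

theorem eH_zero_sq : eH α β γ 0 * eH α β γ 0 = (-1 : ℝ) • 1 := by
  have h := RingQuot.mkAlgHom_rel ℝ (HRel.sq1 (α := α) (β := β) (γ := γ))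
  rw [map_mul, map_neg, map_one] at h
  exact h.trans (neg_one_smul ℝ _).symm

theorem eH_one_sq : eH α β γ 1 * eH α β γ 1 = (-1 : ℝ) • 1 := by
  have h := RingQuot.mkAlgHom_rel ℝ (HRel.sq2 (α := α) (β := β) (γ := γ))
  rw [map_mul, map_neg, map_one] at h
  exact h.trans (neg_one_smul ℝ _).symm

theorem eH_two_sq : eH α β γ 2 * eH α β γ 2 = (-1 : ℝ) • 1 := by
  have h := RingQuot.mkAlgHom_rel ℝ (HRel.sq3 (α := α) (β := β) (γ := γ))
  rw [map_mul, map_neg, map_one] at h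
  exact h.trans (neg_one_smul ℝ _).symm

theorem eH_one_mul_zero :
    eH α β γ 1 * eH α β γ 0 = (2 * α) • (1 : HAlg α β γ) - eH α β γ 0 * eH α β γ 1 := by
  have h := RingQuot.mkAlgHom_rel ℝ (HRel.ac12 (α := α) (β := β) (γ := γ))
  rw [map_add, map_mul, map_mul, AlgHom.commutes, Algebra.algebraMap_eq_smul_one] at h
  exact eq_sub_of_add_eq' h

theorem eH_two_mul_one :
    eH α β γ 2 * eH α β γ 1 = (2 * β) • (1 : HAlg α β γ) - eH α β γ 1 * eH α β γ 2 := by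
  have h := RingQuot.mkAlgHom_rel ℝ (HRel.ac23 (α := α) (β := β) (γ := γ))
  rw [map_add, map_mul, map_mul, AlgHom.commutes, Algebra.algebraMap_eq_smul_one] at h
  exact eq_sub_of_add_eq' h

theorem eH_two_mul_zero :
    eH α β γ 2 * eH α β γ 0 = (2 * γ) • (1 : HAlg α β γ) - eH α β γ 0 * eH α β γ 2 := by
  have h := RingQuot.mkAlgHom_rel ℝ (HRel.ac31 (α := α) (β := β) (γ := γ))
  rw [map_add, map_mul, map_mul, AlgHom.commutes, Algebra.algebraMap_eq_smul_one] at h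
  exact eq_sub_of_add_eq h

variable (α β γ) in
/-- The component of `e₂` orthogonal to `e₁`. -/
noncomputable def orthH₁ : HAlg α β γ := eH α β γ 1 + α • eH α β γ 0

variable (α β γ) in
/-- The component of `e₃` orthogonal to `e₁`. -/
noncomputable def orthH₂ : HAlg α β γ := eH α β γ 2 + γ • eH α β γ 0

theorem isDegenerateTriple_HAlg (hα : α * α = 1) (hγ : γ * γ = 1) (hβ : β = -(α * γ)) :
    IsDegenerateTriple (eH α β γ 0) (orthH₁ α β γ) (orthH₂ α β γ) := by
  constructor <;>
    simp only [orthH₁, orthH₂, mul_add, add_mul, smul_mul_assoc, mul_smul_comm, eH_zero_sq,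
      eH_one_sq, eH_two_sq, eH_one_mul_zero, eH_two_mul_one, eH_two_mul_zero]
  · module
  · match_scalars <;> linarith
  · match_scalars <;> linarith
  · module
  · module
  · match_scalars <;> linarith

theorem exists_eq_monomialSum (hα : α * α = 1) (hγ : γ * γ = 1) (hβ : β = -(α * γ))
    (x : HAlg α β γ) :
    ∃ a, x = monomialSum (eH α β γ 0) (orthH₁ α β γ) (orthH₂ α β γ) a := by
  have hf := isDegenerateTriple_HAlg hα hγ hβ
  have key : ∀ w : FreeAlgebra ℝ (Fin 3), ∀ a, ∃ b,
      RingQuot.mkAlgHom ℝ (HRel α β γ) w *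
        monomialSum (eH α β γ 0) (orthH₁ α β γ) (orthH₂ α β γ) a =
      monomialSum (eH α β γ 0) (orthH₁ α β γ) (orthH₂ α β γ) b := by
    intro w
    induction w using FreeAlgebra.induction with
    | grade0 r =>
      intro a
      exact ⟨r • a, by rw [AlgHom.commutes, ← Algebra.smul_def, monomialSum_smul]⟩
    | grade1 i =>
      intro a
      change ∃ b, eH α β γ i * _ = _
      fin_cases i
      · exact ⟨_, hf.mul_monomialSum₁ a⟩
      · have h : eH α β γ 1 = orthH₁ α β γ + (-α) • eH α β γ 0 := by
          rw [orthH₁]; module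
        change ∃ b, eH α β γ 1 * _ = _
        rw [h, add_mul, smul_mul_assoc, hf.mul_monomialSum₁, hf.mul_monomialSum₂,
          ← monomialSum_smul, ← monomialSum_add]
        exact ⟨_, rfl⟩
      · have h : eH α β γ 2 = orthH₂ α β γ + (-γ) • eH α β γ 0 := by
          rw [orthH₂]; module
        change ∃ b, eH α β γ 2 * _ = _
        rw [h, add_mul, smul_mul_assoc, hf.mul_monomialSum₁, hf.mul_monomialSum₃,
          ← monomialSum_smul, ← monomialSum_add]
        exact ⟨_, rfl⟩
    | mul u v hu hv =>
      intro a
      obtain ⟨b, hb⟩ := hv a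
      obtain ⟨c, hc⟩ := hu b
      exact ⟨c, by rw [map_mul, mul_assoc, hb, hc]⟩
    | add u v hu hv =>
      intro a
      obtain ⟨b, hb⟩ := hu a
      obtain ⟨c, hc⟩ := hv a
      exact ⟨b + c, by rw [map_add, add_mul, hb, hc, monomialSum_add]⟩
  obtain ⟨w, rfl⟩ := RingQuot.mkAlgHom_surjective ℝ (HRel α β γ) x
  obtain ⟨b, hb⟩ := key w (Pi.single 0 1)
  exact ⟨b, by simpa [monomialSum] using hb⟩

theorem exists_matrix_representation (hα : α * α = 1) (hγ : γ * γ = 1) (hβ : β = -(α * γ)) :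
    ∃ φ : HAlg α β γ →ₐ[ℝ] Matrix (Fin 4) (Fin 4) ℂ,
      φ (eH α β γ 0) = gradingMatrix ∧ φ (orthH₁ α β γ) = wedgeMatrix₁ ∧
        φ (orthH₂ α β γ) = wedgeMatrix₂ := by
  have hf := isDegenerateTriple_matrix
  let ψ : FreeAlgebra ℝ (Fin 3) →ₐ[ℝ] Matrix (Fin 4) (Fin 4) ℂ :=
    FreeAlgebra.lift ℝ ![gradingMatrix, wedgeMatrix₁ - α • gradingMatrix,
      wedgeMatrix₂ - γ • gradingMatrix]
  have ψ₀ : ψ (FreeAlgebra.ι ℝ 0) = gradingMatrix := by simp [ψ]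
  have ψ₁ : ψ (FreeAlgebra.ι ℝ 1) = wedgeMatrix₁ - α • gradingMatrix := by simp [ψ]
  have ψ₂ : ψ (FreeAlgebra.ι ℝ 2) = wedgeMatrix₂ - γ • gradingMatrix := by simp [ψ]
  have hψ : ∀ ⦃x y⦄, HRel α β γ x y → ψ x = ψ y := by
    intro x y h
    cases h <;> (try simp only [Algebra.algebraMap_eq_smul_one]) <;>
      simp only [map_mul, map_add, map_neg, map_one, map_smul, ψ₀, ψ₁, ψ₂, mul_sub,
        sub_mul, smul_mul_assoc, mul_smul_comm, hf.sq₁, hf.sq₂, hf.sq₃, hf.anti₂₁, hf.anti₃₁,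
        hf.anti₃₂]
    · match_scalars <;> linarith
    · match_scalars <;> linarith
    · module
    · match_scalars <;> linarith
    · module
  have hι (i : Fin 3) : RingQuot.liftAlgHom ℝ ⟨ψ, hψ⟩ (eH α β γ i) =
      ψ (FreeAlgebra.ι ℝ i) := by
    simp only [eH, RingQuot.liftAlgHom_mkAlgHom_apply]
  refine ⟨RingQuot.liftAlgHom ℝ ⟨ψ, hψ⟩, ?_, ?_, ?_⟩
  · rw [hι, ψ₀]
  · rw [orthH₁, map_add, map_smul, hι, hι, ψ₀, ψ₁, sub_add_cancel]
  · rw [orthH₂, map_add, map_smul, hι, hι, ψ₀, ψ₂, sub_add_cancel]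

theorem monomialSum_HAlg_injective (hα : α * α = 1) (hγ : γ * γ = 1) (hβ : β = -(α * γ)) :
    Function.Injective (monomialSum (eH α β γ 0) (orthH₁ α β γ) (orthH₂ α β γ)) := by
  obtain ⟨φ, h₁, h₂, h₃⟩ := exists_matrix_representation hα hγ hβ
  intro a b h
  have h' := congrArg φ h
  rw [map_monomialSum, map_monomialSum, h₁, h₂, h₃] at h'
  exact monomialSum_matrix_injective h'

theorem mem_center_of_commute {x : HAlg α β γ} (h₁ : Commute (eH α β γ 0) x)
    (h₂ : Commute (orthH₁ α β γ) x) (h₃ : Commute (orthH₂ α β γ) x) :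
    x ∈ Subalgebra.center ℝ (HAlg α β γ) := by
  have hgen (i : Fin 3) : Commute (eH α β γ i) x := by
    fin_cases i
    · exact h₁
    · simpa [orthH₁] using h₂.sub_left (h₁.smul_left α)
    · simpa [orthH₂] using h₃.sub_left (h₁.smul_left γ)
  rw [Subalgebra.mem_center_iff]
  intro y
  obtain ⟨w, rfl⟩ := RingQuot.mkAlgHom_surjective ℝ (HRel α β γ) y
  change Commute (RingQuot.mkAlgHom ℝ (HRel α β γ) w) x
  induction w using FreeAlgebra.induction with
  | grade0 r =>
    rw [AlgHom.commutes]
    exact Algebra.commutes r x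
  | grade1 i => exact hgen i
  | mul u v hu hv =>
    rw [map_mul]
    exact hu.mul_left hv
  | add u v hu hv =>
    rw [map_add]
    exact hu.add_left hv

theorem zH_eq (hβ : β = -(α * γ)) : zH α β γ = -(orthH₁ α β γ * orthH₂ α β γ) := by
  simp only [zH, orthH₁, orthH₂, mul_add, add_mul, smul_mul_assoc, mul_smul_comm, eH_zero_sq,
    eH_one_mul_zero, eH_two_mul_zero, Algebra.algebraMap_eq_smul_one]
  match_scalars <;> linarith

theorem cH_eq (hβ : β = -(α * γ)) :
    cH α β γ = -(eH α β γ 0 * (orthH₁ α β γ * orthH₂ α β γ)) := by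
  have h (x : HAlg α β γ) : eH α β γ 0 * (eH α β γ 0 * x) = (-1 : ℝ) • x := by
    rw [← mul_assoc, eH_zero_sq, smul_mul_assoc, one_mul]
  simp only [cH, orthH₁, orthH₂, mul_add, add_mul, smul_mul_assoc, mul_smul_comm, eH_zero_sq,
    eH_one_mul_zero, mul_sub, h, mul_one, mul_assoc]
  match_scalars <;> linarith

theorem exists_combination_of_mem_center (hα : α * α = 1) (hγ : γ * γ = 1)
    (hβ : β = -(α * γ)) {x : HAlg α β γ} (hx : x ∈ Subalgebra.center ℝ (HAlg α β γ)) :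
    ∃ a b c : ℝ, x = a • (1 : HAlg α β γ) + b • cH α β γ + c • zH α β γ := by
  have hf := isDegenerateTriple_HAlg hα hγ hβ
  rw [Subalgebra.mem_center_iff] at hx
  obtain ⟨a, rfl⟩ := exists_eq_monomialSum hα hγ hβ x
  have k₁ := monomialSum_HAlg_injective hα hγ hβ
    ((hf.mul_monomialSum₁ a).symm.trans ((hx _).trans (hf.monomialSum_mul₁ a)))
  have k₂ := monomialSum_HAlg_injective hα hγ hβ
    ((hf.mul_monomialSum₂ a).symm.trans ((hx _).trans (hf.monomialSum_mul₂ a)))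
  have e1 : a 1 = 0 := by have := congrFun k₂ 4; simp at this; linarith
  have e2 : a 2 = 0 := by have := congrFun k₁ 4; simp at this; linarith
  have e3 : a 3 = 0 := by have := congrFun k₁ 5; simp at this; linarith
  have e4 : a 4 = 0 := by have := congrFun k₁ 2; simp at this; linarith
  have e5 : a 5 = 0 := by have := congrFun k₁ 3; simp at this; linarith
  refine ⟨a 0, -a 7, -a 6, ?_⟩
  rw [cH_eq hβ, zH_eq hβ, monomialSum, e1, e2, e3, e4, e5]
  module

theorem linearIndependent_one_cH_zH (hα : α * α = 1) (hγ : γ * γ = 1) (hβ : β = -(α * γ)) :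
    LinearIndependent ℝ ![1, cH α β γ, zH α β γ] := by
  rw [Fintype.linearIndependent_iff]
  intro g hg
  have h : monomialSum (eH α β γ 0) (orthH₁ α β γ) (orthH₂ α β γ)
      ![g 0, 0, 0, 0, 0, 0, -g 2, -g 1] =
      monomialSum (eH α β γ 0) (orthH₁ α β γ) (orthH₂ α β γ) 0 := by
    simp [Fin.sum_univ_three, cH_eq hβ, zH_eq hβ] at hg
    simp [monomialSum]
    rw [← hg]
    module
  have k := monomialSum_HAlg_injective hα hγ hβ h
  intro i
  fin_cases i
  · simpa using congrFun k 0
  · simpa using congrFun k 7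
  · simpa using congrFun k 6

end HAlg

/-- If `|α| = |β| = |γ| = 1` and `γ = -αβ`, then `z` is central and the
center of `H_{α,β,γ}` is 3-dimensional, spanned by `1`, `c`, `z`. -/
theorem stmt_17 (α β γ : ℝ) (hα : |α| = 1) (hβ : |β| = 1) (hγ : |γ| = 1)
    (hrel : γ = -(α * β)) :
    zH α β γ ∈ Subalgebra.center ℝ (HAlg α β γ) ∧
      Subalgebra.toSubmodule (Subalgebra.center ℝ (HAlg α β γ)) =
        Submodule.span ℝ ({1, cH α β γ, zH α β γ} : Set (HAlg α β γ)) ∧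
      Module.finrank ℝ (Subalgebra.center ℝ (HAlg α β γ)) = 3 := by
  have hα' : α * α = 1 := by rw [← abs_mul_abs_self, hα, one_mul]
  have hγ' : γ * γ = 1 := by rw [← abs_mul_abs_self, hγ, one_mul]
  have hβ' : β = -(α * γ) := by rw [hrel]; linear_combination (-β) * hα'
  have hf := isDegenerateTriple_HAlg hα' hγ' hβ'
  have hz : zH α β γ ∈ Subalgebra.center ℝ (HAlg α β γ) := by
    rw [zH_eq hβ']
    obtain ⟨h₁, h₂, h₃⟩ := hf.commute_mul
    exact neg_mem (mem_center_of_commute h₁ h₂ h₃)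
  have hc : cH α β γ ∈ Subalgebra.center ℝ (HAlg α β γ) := by
    rw [cH_eq hβ']
    obtain ⟨h₁, h₂, h₃⟩ := hf.commute_mul_mul
    exact neg_mem (mem_center_of_commute h₁ h₂ h₃)
  have hspan : Subalgebra.toSubmodule (Subalgebra.center ℝ (HAlg α β γ)) =
      Submodule.span ℝ ({1, cH α β γ, zH α β γ} : Set (HAlg α β γ)) := by
    apply le_antisymm
    · intro x hx
      obtain ⟨a, b, c, h⟩ := exists_combination_of_mem_center hα' hγ' hβ' hx
      exact Submodule.mem_span_triple.2 ⟨a, b, c, h.symm⟩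
    · rw [Submodule.span_le]
      rintro x (rfl | rfl | rfl)
      · exact one_mem (Subalgebra.center ℝ (HAlg α β γ))
      · exact hc
      · exact hz
  refine ⟨hz, hspan, ?_⟩
  have hrange : Set.range ![1, cH α β γ, zH α β γ] = {1, cH α β γ, zH α β γ} := by
    simp only [Matrix.range_cons, Matrix.range_empty, Set.union_empty, Set.singleton_union]
  change Module.finrank ℝ (Subalgebra.toSubmodule (Subalgebra.center ℝ (HAlg α β γ))) = 3
  rw [hspan, ← hrange, finrank_span_eq_card (linearIndependent_one_cH_zH hα' hγ' hβ'),
    Fintype.card_fin]
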